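/- Let Z = {(x,y,z) ∈ ℝ³ : x² + y² = 1} be the cylinder and f : Z → ℝ a smooth proper surjective function with f(x,y,z) → +∞ as z → +∞ and f(x,y,z) → −∞ as z → −∞ uniformly. Then for any regular value t ∈ ℝ, the level set f⁻¹(t) has a connected component which is a simple closed curve whose homotopy class generates π₁(Z) ≅ ℤ. -/

import Mathlib

/-!
The level set is a compact one-dimensional manifold, and its components are the periodic orbits of
a nowhere vanishing tangent field. If the angular coordinate `θ` lifted to a real function on every
orbit, these lifts would form a lift `g` on the whole level set. Extend `g` to a function `G` on
the cylinder: the map equal to `1` below the level set and to `θ * exp (-i * G)` above it is then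
continuous, and shows by homotopy that the angle of a high horizontal circle lifts to `ℝ`, which is
absurd. So some orbit has winding number `n ≠ 0`. It is simple, hence `n = ±1`: by Hopf's chord
argument, a planar curve with `c (s + T) = c s + 2 * π * |n|` also has a chord equal to `2 * π`,
and such a chord joins two parameters of the same point of the orbit. Finally, the deck group of
the universal covering of the cylinder is generated by the translation by `2 * π`.
-/

open Set Filter Topology

namespace CylinderLevelSet

section GlobalFlow

variable {E : Type*} [NormedAddCommGroup E] [NormedSpace ℝ E] {v : E → E}

theorem dist_integralCurve_le_of_nonneg {K : NNReal} (hv : LipschitzWith K v) {c d : ℝ → E}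
    (hc : IsIntegralCurve c fun _ => v) (hd : IsIntegralCurve d fun _ => v) {s : ℝ} (hs : 0 ≤ s) :
    dist (c s) (d s) ≤ dist (c 0) (d 0) * Real.exp (K * s) := by
  simpa using dist_le_of_trajectories_ODE (v := fun _ => v) (fun _ => hv)
    hc.continuous.continuousOn (fun r _ => (hc r).hasDerivWithinAt)
    hd.continuous.continuousOn (fun r _ => (hd r).hasDerivWithinAt) le_rfl s ⟨hs, le_rfl⟩

theorem isIntegralCurve_comp_neg {c : ℝ → E} (hc : IsIntegralCurve c fun _ => v) :
    IsIntegralCurve (fun s => c (-s)) fun _ => -v := fun s => by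
  simpa [Function.comp_def] using (hc (-s)).scomp s (hasDerivAt_neg s)

theorem dist_integralCurve_le {K : NNReal} (hv : LipschitzWith K v) {c d : ℝ → E}
    (hc : IsIntegralCurve c fun _ => v) (hd : IsIntegralCurve d fun _ => v) (s : ℝ) :
    dist (c s) (d s) ≤ dist (c 0) (d 0) * Real.exp (K * |s|) := by
  obtain hs | hs := le_total 0 s
  · simpa only [abs_of_nonneg hs] using dist_integralCurve_le_of_nonneg hv hc hd hs
  · simpa [abs_of_nonpos hs] using dist_integralCurve_le_of_nonneg hv.neg
      (isIntegralCurve_comp_neg hc) (isIntegralCurve_comp_neg hd) (neg_nonneg.2 hs)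

theorem exists_isIntegralCurve [CompleteSpace E] (hv : ContDiff ℝ 1 v) {K B : NNReal}
    (hK : LipschitzWith K v) (hB : ∀ x, ‖v x‖ ≤ B) (x : E) :
    ∃ c : ℝ → E, c 0 = x ∧ IsIntegralCurve c fun _ => v := by
  suffices h : ∃ c : ℝ → E, c 0 = x ∧ IsMIntegralCurve (I := modelWithCornersSelf ℝ E) c v by
    obtain ⟨c, h0, hc⟩ := h
    exact ⟨c, h0, fun s => (hc s).hasFDerivAt⟩
  rw [exists_isMIntegralCurve_iff_exists_isMIntegralCurveOn_Ioo
    (contMDiff_vectorSpace_iff_contDiff.2 hv)]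
  intro a
  have h0 : (0 : ℝ) ∈ Icc (-|a|) |a| := by simp
  have hpl : IsPicardLindelof (fun _ ↦ v) (⟨0, h0⟩ : Icc (-|a|) |a|) x (B * ‖a‖₊) 0 B K :=
    .of_time_independent (fun x _ => hB x) hK.lipschitzOnWith (by simp)
  obtain ⟨c, hc0, hc⟩ := hpl.exists_eq_forall_mem_Icc_hasDerivWithinAt₀
  have hsub : Ioo (-a) a ⊆ Icc (-|a|) |a| :=
    Ioo_subset_Icc_self.trans (Icc_subset_Icc (neg_le_neg (le_abs_self a)) (le_abs_self a))
  exact ⟨c, hc0, fun s hs => ((hc s (hsub hs)).mono hsub).hasFDerivWithinAt.hasMFDerivWithinAt⟩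

theorem exists_flow_isIntegralCurve [CompleteSpace E] (hv : ContDiff ℝ 1 v)
    (hc : HasCompactSupport v) :
    ∃ φ : Flow ℝ E, ∀ x, IsIntegralCurve (φ · x) fun _ => v := by
  obtain ⟨K, hK⟩ := ContDiff.lipschitzWith_of_hasCompactSupport hc hv one_ne_zero
  obtain ⟨B, hB⟩ := hc.exists_bound_of_continuous hv.continuous
  choose φ hφ0 hφ using exists_isIntegralCurve hv hK
    (fun x => (hB x).trans (Real.le_coe_toNNReal B))
  have hadd (s u x) : φ x (s + u) = φ (φ x u) s :=
    congrFun (ODE_solution_unique_univ (v := fun _ => v) (s := fun _ => univ) (t₀ := 0)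
      (fun _ => hK.lipschitzOnWith) (fun r => ⟨(hφ x).comp_add u r, mem_univ _⟩)
      (fun r => ⟨hφ (φ x u) r, mem_univ _⟩) (by simp [hφ0])) s
  have hcont : Continuous fun p : ℝ × E => φ p.2 p.1 := by
    refine continuous_iff_continuousAt.2 fun ⟨s, x⟩ => tendsto_iff_dist_tendsto_zero.2 ?_
    have hbound : Tendsto (fun p : ℝ × E =>
        dist p.2 x * Real.exp (K * |p.1|) + dist (φ x p.1) (φ x s)) (𝓝 (s, x)) (𝓝 0) := by
      have hφx := (hφ x).continuous
      have : Continuous fun p : ℝ × E =>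
        dist p.2 x * Real.exp (K * |p.1|) + dist (φ x p.1) (φ x s) := by fun_prop
      simpa using this.tendsto (s, x)
    refine squeeze_zero (fun _ => dist_nonneg) (fun p => ?_) hbound
    refine (dist_triangle _ (φ x p.1) _).trans (add_le_add_left ?_ _)
    simpa only [hφ0] using dist_integralCurve_le hK (hφ p.2) (hφ x) p.1
  exact ⟨⟨fun s x => φ x s, hcont, hadd, hφ0⟩, hφ⟩

end GlobalFlow

section FlowBox

variable {E F : Type*} [NormedAddCommGroup E] [NormedSpace ℝ E] [NormedAddCommGroup F]
  [NormedSpace ℝ F]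

theorem exists_mem_nhds_injOn [FiniteDimensional ℝ E] {f : E → F}
    {f' : E →L[ℝ] F} {x : E} (hf : HasStrictFDerivAt f f' x) (hinj : Function.Injective f') :
    ∃ V ∈ 𝓝 x, InjOn f V := by
  obtain ⟨K, hK, hlip⟩ := f'.toLinearMap.injective_iff_antilipschitz.1 hinj
  have hK' : (0 : ℝ) < (2 * (K : ℝ))⁻¹ := by positivity
  have hclose := hf.isLittleO.def hK'
  rw [nhds_prod_eq, eventually_prod_self_iff'] at hclose
  obtain ⟨V, hV, hVclose⟩ := hclose
  refine ⟨V, hV, fun y hy z hz heq => ?_⟩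
  have hp := hVclose y hy z hz
  rw [heq, sub_self, zero_sub, norm_neg] at hp
  have hanti : ‖y - z‖ ≤ K * ‖f' (y - z)‖ := by
    simpa using hlip.le_mul_norm (map_zero _) (y - z)
  have hhalf : K * ‖f' (y - z)‖ ≤ ‖y - z‖ / 2 :=
    (mul_le_mul_of_nonneg_left hp K.coe_nonneg).trans_eq (by field_simp)
  have hzero : ‖y - z‖ ≤ 0 := by linarith
  exact sub_eq_zero.1 (norm_le_zero_iff.1 hzero)

theorem image_mem_nhdsWithin_levelSet [FiniteDimensional ℝ E] {c : ℝ → E} {v : E} {h : E → F}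
    {h' : E →L[ℝ] F} {s : ℝ} (hc : HasStrictDerivAt c v s) (hv : v ≠ 0)
    (hh : HasStrictFDerivAt h h' (c s)) (hker : h'.ker ≤ Submodule.span ℝ {v})
    (hconst : ∀ r, h (c r) = h (c s)) {U : Set ℝ} (hU : U ∈ 𝓝 s) :
    c '' U ∈ 𝓝[h ⁻¹' {h (c s)}] (c s) := by
  obtain ⟨l, hl⟩ := SeparatingDual.exists_eq_one (R := ℝ) hv
  have hinj : Function.Injective (h'.prod l) := by
    refine (injective_iff_map_eq_zero _).2 fun u hu => ?_
    obtain ⟨a, rfl⟩ := Submodule.mem_span_singleton.1 (hker (Prod.ext_iff.1 hu).1)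
    have ha : a = 0 := by simpa [hl] using (Prod.ext_iff.1 hu).2
    rw [ha, zero_smul]
  have hlc : HasStrictDerivAt (l ∘ c) 1 s := hl ▸ l.hasStrictFDerivAt.comp_hasStrictDerivAt s hc
  obtain ⟨V, hV, hVinj⟩ := exists_mem_nhds_injOn (hh.prodMk l.hasStrictFDerivAt) hinj
  have hUV : U ∩ c ⁻¹' V ∈ 𝓝 s := inter_mem hU (hc.hasDerivAt.continuousAt.preimage_mem_nhds hV)
  have himage : (l ∘ c) '' (U ∩ c ⁻¹' V) ∈ 𝓝 (l (c s)) :=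
    hlc.map_nhds_eq one_ne_zero ▸ image_mem_map hUV
  filter_upwards [nhdsWithin_le_nhds hV, self_mem_nhdsWithin,
    nhdsWithin_le_nhds (l.continuous.continuousAt.preimage_mem_nhds himage)]
  rintro q hqV hq ⟨r, ⟨hrU, hrV⟩, hr⟩
  exact ⟨r, hrU, hVinj hrV hqV (Prod.ext ((hconst r).trans hq.symm) hr)⟩

end FlowBox

section LevelSetFlow

variable {E F : Type*} [NormedAddCommGroup E] [NormedSpace ℝ E]
  [NormedAddCommGroup F] [NormedSpace ℝ F] {h : E → F} {W : E → E}

theorem comp_isIntegralCurve_eq_of_tangent (hh : Differentiable ℝ h)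
    (htan : ∀ x, fderiv ℝ h x (W x) = 0) {c : ℝ → E} (hc : IsIntegralCurve c fun _ => W) (s r : ℝ) :
    h (c s) = h (c r) := by
  have hderiv (s : ℝ) : HasDerivAt (h ∘ c) 0 s :=
    htan (c s) ▸ (hh (c s)).hasFDerivAt.comp_hasDerivAt s (hc s)
  exact is_const_of_deriv_eq_zero (fun s => (hderiv s).differentiableAt)
    (fun s => (hderiv s).deriv) s r

theorem exists_flow_levelSet_isOpenMap [FiniteDimensional ℝ E] (hh : ContDiff ℝ 1 h)
    (hW : ContDiff ℝ 1 W) (htan : ∀ x, fderiv ℝ h x (W x) = 0) {a : F}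
    (hcpt : IsCompact (h ⁻¹' {a})) (hne : ∀ x ∈ h ⁻¹' {a}, W x ≠ 0)
    (hker : ∀ x ∈ h ⁻¹' {a}, (fderiv ℝ h x).ker ≤ Submodule.span ℝ {W x}) :
    ∃ ψ : Flow ℝ (h ⁻¹' {a}), ∀ x, IsOpenMap (ψ · x) ∧ ∃ s, ψ s x ≠ x := by
  obtain ⟨R, hR, hsub⟩ := hcpt.isBounded.subset_closedBall_lt 0 0
  let χ : ContDiffBump (0 : E) := ⟨R, R + 1, hR, lt_add_one R⟩
  let V : E → E := fun x => χ x • W x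
  have hV : ContDiff ℝ 1 V := χ.contDiff.smul hW
  have hVL {x : E} (hx : x ∈ h ⁻¹' {a}) : V x = W x := by
    simp only [V, χ.one_of_mem_closedBall (hsub hx), one_smul]
  obtain ⟨φ, hφ⟩ := exists_flow_isIntegralCurve hV χ.hasCompactSupport.smul_right
  have hconst (x : E) (s r : ℝ) : h (φ s x) = h (φ r x) :=
    comp_isIntegralCurve_eq_of_tangent (hh.differentiable one_ne_zero)
      (fun x => by simp [V, htan]) (hφ x) s r
  have hinv : IsInvariant φ (h ⁻¹' {a}) := fun s x hx => by
    rw [mem_preimage, hconst x s 0, φ.map_zero_apply]; exact hx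
  refine ⟨φ.restrict hinv, fun x => ⟨isOpenMap_iff_nhds_le.2 fun s U hU => ?_, ?_⟩⟩
  · have hx : φ s x ∈ h ⁻¹' {a} := hinv s x.2
    have hstrict : HasStrictDerivAt (φ · (x : E)) (V (φ s x)) s :=
      hasStrictDerivAt_of_hasDerivAt_of_continuousAt (f' := fun r => V (φ r x)) (.of_forall (hφ x))
        (hV.continuous.comp (hφ x).continuous).continuousAt
    rw [hVL hx] at hstrict
    have hmem := image_mem_nhdsWithin_levelSet hstrict (hne _ hx)
      (hh.contDiffAt.hasStrictFDerivAt one_ne_zero) (hker _ hx) (fun r => hconst x r s) hU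
    rw [show h (φ s x) = a from hx] at hmem
    refine mem_nhds_subtype_iff_nhdsWithin.2 (mem_of_superset hmem ?_)
    exact image_subset_iff.2 fun r hr => ⟨_, hr, φ.coe_restrict_apply hinv r x⟩
  · by_contra! hfix
    have hderiv : HasDerivAt (fun _ : ℝ => (x : E)) (V x) 0 := by
      simpa only [← φ.coe_restrict_apply hinv, hfix] using hφ x 0
    exact hne x x.2 (hVL x.2 ▸ hderiv.unique (hasDerivAt_const _ _))

end LevelSetFlow

section ConnectedComponents

theorem connectedComponentIn_range {X Y : Type*} [TopologicalSpace X] [TopologicalSpace Y]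
    {f : X → Y} (hf : IsInducing f) (x : X) :
    connectedComponentIn (range f) (f x) = f '' connectedComponent x := by
  refine Subset.antisymm ?_ (IsPreconnected.subset_connectedComponentIn
    (isPreconnected_connectedComponent.image f hf.continuous.continuousOn)
    (mem_image_of_mem f mem_connectedComponent) (image_subset_range f _))
  have himage := image_preimage_eq_of_subset (connectedComponentIn_subset (range f) (f x))
  have hpre : IsPreconnected (f ⁻¹' connectedComponentIn (range f) (f x)) :=
    hf.isPreconnected_image.1 (himage.symm ▸ isPreconnected_connectedComponentIn)
  exact himage ▸ image_mono (hpre.subset_connectedComponent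
    (mem_connectedComponentIn (mem_range_self x)))

end ConnectedComponents

section OpenOrbits

variable {X : Type*} [TopologicalSpace X] {ψ : Flow ℝ X}

theorem orbit_eq_of_mem {x y : X} (hy : y ∈ ψ.orbit x) : ψ.orbit y = ψ.orbit x :=
  let _ := ψ.toAddAction
  AddAction.orbit_eq_iff.2 hy

theorem isClopen_orbit (hopen : ∀ x, IsOpenMap (ψ · x)) (x : X) : IsClopen (ψ.orbit x) := by
  refine ⟨⟨isOpen_iff_mem_nhds.2 fun y hy => ?_⟩, (hopen x).isOpen_range⟩
  refine mem_of_superset ((hopen y).isOpen_range.mem_nhds (ψ.mem_orbit_self y)) ?_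
  intro z (hzy : z ∈ ψ.orbit y) hzx
  exact hy (orbit_eq_of_mem hzx ▸ orbit_eq_of_mem hzy ▸ ψ.mem_orbit_self y)

theorem orbit_eq_connectedComponent (hopen : ∀ x, IsOpenMap (ψ · x)) (x : X) :
    ψ.orbit x = connectedComponent x :=
  ((isPreconnected_range (ψ.continuous continuous_id continuous_const)).subset_connectedComponent
    (ψ.mem_orbit_self x)).antisymm
    ((isClopen_orbit hopen x).connectedComponent_subset (ψ.mem_orbit_self x))

theorem exists_period [CompactSpace X] [T1Space X] (hopen : ∀ x, IsOpenMap (ψ · x)) {x : X}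
    (hmove : ∃ s, ψ s x ≠ x) :
    ∃ T > 0, ∀ s u, ψ s x = ψ u x ↔ s - u ∈ AddSubgroup.zmultiples T := by
  let _ := ψ.toAddAction
  have hcont : Continuous (ψ · x) := ψ.continuous continuous_id continuous_const
  have heq (s u : ℝ) : ψ s x = ψ u x ↔ s - u ∈ AddAction.stabilizer ℝ x := by
    change _ ↔ ψ (s - u) x = x
    rw [← (ψ.toHomeomorph (-u)).injective.eq_iff]
    simp [← ψ.map_add, neg_add_eq_sub]
  obtain hdense | ⟨a, ha⟩ := AddSubgroup.dense_or_cyclic (AddAction.stabilizer ℝ x)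
  · have hclosed : IsClosed (AddAction.stabilizer ℝ x : Set ℝ) :=
      isClosed_singleton.preimage hcont
    obtain ⟨s, hs⟩ := hmove
    have hmem : s ∈ (AddAction.stabilizer ℝ x : Set ℝ) := hclosed.closure_eq ▸ hdense s
    exact absurd hmem hs
  rw [← AddSubgroup.zmultiples_eq_closure] at ha
  refine ⟨|a|, abs_pos.2 ?_, fun s u => ?_⟩
  · rintro rfl
    have hinj : Function.Injective (ψ · x) := fun s u hsu => by
      simpa [heq, ha, sub_eq_zero] using hsu
    have hemb := IsOpenEmbedding.of_continuous_injective_isOpenMap hcont hinj (hopen x)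
    have hcpt : IsCompact (univ : Set ℝ) := hemb.isInducing.isCompact_iff.2 <|
      image_univ ▸ (isClopen_orbit hopen x).isClosed.isCompact
    exact noncompact_univ ℝ hcpt
  · obtain h | h := abs_choice a <;> simp [heq, ha, h]

end OpenOrbits

section RealLift

variable {X Y : Type*} [TopologicalSpace X] [TopologicalSpace Y]

/-- `f` admits a continuous choice of argument; in degree-theoretic terms, `f` is null-homotopic. -/
def HasRealLift (f : C(X, Circle)) : Prop :=
  ∃ g : C(X, ℝ), ∀ x, Circle.exp (g x) = f x

theorem HasRealLift.of_simplyConnectedSpace [SimplyConnectedSpace X] [LocallyPathConnectedSpace X]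
    (f : C(X, Circle)) : HasRealLift f := by
  obtain ⟨x₀⟩ : Nonempty X := inferInstance
  obtain ⟨θ, hθ⟩ := Circle.exp_surjective (f x₀)
  obtain ⟨g, ⟨-, hg⟩, -⟩ := Circle.isCoveringMap_exp.existsUnique_continuousMap_lifts f x₀ θ hθ
  exact ⟨g, congrFun hg⟩

theorem HasRealLift.of_homotopic {f₀ f₁ : C(X, Circle)} (h : HasRealLift f₀)
    (H : f₀.Homotopic f₁) : HasRealLift f₁ := by
  obtain ⟨g, hg⟩ := h
  obtain ⟨H⟩ := H
  have hH0 (x : X) : H (0, x) = Circle.exp (g x) := by simp [hg]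
  refine ⟨(Circle.isCoveringMap_exp.liftHomotopy H.toContinuousMap g hH0).comp
    (.prodMk (.const X 1) (.id X)), fun x => ?_⟩
  exact (congrFun (Circle.isCoveringMap_exp.liftHomotopy_lifts H.toContinuousMap g hH0)
    (1, x)).trans (H.apply_one x)

theorem sub_eq_sub_of_circleExp_eq [PreconnectedSpace X] {g₀ g₁ : X → ℝ} (h₀ : Continuous g₀)
    (h₁ : Continuous g₁) (h : ∀ x, Circle.exp (g₀ x) = Circle.exp (g₁ x)) (x y : X) :
    g₀ x - g₁ x = g₀ y - g₁ y :=
  Circle.isCoveringMap_exp.const_of_comp (g := g₀ - g₁) (h₀.sub h₁)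
    (fun x y => by simp [Circle.exp_sub, h]) x y

theorem not_hasRealLift_id : ¬ HasRealLift (ContinuousMap.id Circle) := by
  rintro ⟨g, hg⟩
  have h := sub_eq_sub_of_circleExp_eq (g.continuous.comp Circle.exp.continuous) continuous_id
    (fun s => hg (Circle.exp s)) 0 (2 * Real.pi)
  have hexp : Circle.exp (2 * Real.pi) = Circle.exp 0 := by simp
  simp [-Circle.exp_two_pi, hexp] at h
  linarith [Real.pi_pos]

theorem HasRealLift.comp_of_homotopic_across_levelSet [NormalSpace X] {θ : C(X, Circle)}
    {f : C(X, ℝ)} {t : ℝ} (hθ : HasRealLift (θ.restrict (f ⁻¹' {t}))) {i₀ i₁ : C(Y, X)}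
    (hi : i₀.Homotopic i₁) (h₀ : ∀ y, f (i₀ y) ≤ t) (h₁ : ∀ y, t ≤ f (i₁ y)) :
    HasRealLift (θ.comp i₁) := by
  obtain ⟨g, hg⟩ := hθ
  obtain ⟨G, hG⟩ := g.exists_restrict_eq (isClosed_singleton.preimage f.continuous)
  have hexp {x : X} (hx : f x = t) : 1 = θ x * Circle.exp (-G x) := by
    have hGx : G x = g ⟨x, hx⟩ := congrArg (· ⟨x, hx⟩) hG
    simp [hGx, hg, Circle.exp_neg]
  let K : C(X, Circle) :=
    { toFun x := if f x ≤ t then 1 else θ x * Circle.exp (-G x)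
      continuous_toFun := Continuous.if_le (by fun_prop) (by fun_prop) (by fun_prop) (by fun_prop)
        fun _ => hexp }
  have hK₁ (y : Y) : K (i₁ y) = θ (i₁ y) * Circle.exp (-G (i₁ y)) := by
    obtain h | h := (h₁ y).eq_or_lt
    · exact (if_pos h.ge).trans (hexp h.symm)
    · exact if_neg h.not_ge
  have hK₀ : HasRealLift (K.comp i₀) := ⟨0, fun y => by simp [K, h₀]⟩
  obtain ⟨l, hl⟩ := hK₀.of_homotopic (.comp (.refl K) hi)
  refine ⟨l + G.comp i₁, fun y => ?_⟩
  calc Circle.exp ((l + G.comp i₁) y)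
    _ = Circle.exp (l y) * Circle.exp (G (i₁ y)) := Circle.exp_add _ _
    _ = K (i₁ y) * Circle.exp (G (i₁ y)) := by rw [hl]; rfl
    _ = θ (i₁ y) := by rw [hK₁, Circle.exp_neg, inv_mul_cancel_right]

theorem HasRealLift.of_forall_orbit {ψ : Flow ℝ X} (hopen : ∀ x, IsOpenMap (ψ · x))
    {θ : C(X, Circle)}
    (h : ∀ x, ∃ l : ℝ → ℝ, Continuous l ∧ (∀ s, Circle.exp (l s) = θ (ψ s x)) ∧
      ∀ s u, ψ s x = ψ u x → l s = l u) :
    HasRealLift θ := by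
  choose l hcont hl hper using h
  let r (x : X) : X := Function.surjInv ConnectedComponents.surjective_coe x
  have hmk (x : X) : (r x : ConnectedComponents X) = x := Function.surjInv_eq _ _
  have hr (x : X) : ∃ s, ψ s (r x) = x := by
    rw [← ψ.mem_orbit_iff, orbit_eq_connectedComponent hopen, ← ConnectedComponents.coe_eq_coe',
      hmk]
  choose τ hτ using hr
  let g (x : X) : ℝ := l (r x) (τ x)
  have hg (s : ℝ) (x : X) : g (ψ s (r x)) = l (r x) s := by
    have hrs : r (ψ s (r x)) = r x := by
      refine congrArg (Function.surjInv ConnectedComponents.surjective_coe) ?_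
      rw [← hmk x, ConnectedComponents.coe_eq_coe', ← orbit_eq_connectedComponent hopen]
      exact ψ.mem_orbit (r x) s
    refine (congrArg (fun y => l y (τ (ψ s (r x)))) hrs).trans (hper _ _ _ ?_)
    exact (congrArg _ hrs.symm).trans (hτ (ψ s (r x)))
  refine ⟨⟨g, continuous_iff_continuousAt.2 fun x => ?_⟩, fun x => ?_⟩
  · have hcomp : g ∘ (ψ · (r x)) = l (r x) := funext fun s => hg s x
    have hlim : Tendsto g (map (ψ · (r x)) (𝓝 (τ x))) (𝓝 (g (ψ (τ x) (r x)))) := by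
      rw [hg, tendsto_map'_iff, hcomp]
      exact (hcont (r x)).tendsto (τ x)
    simpa only [ContinuousAt, hτ] using hlim.mono_left ((hopen (r x)).nhds_le (τ x))
  · exact (hl (r x) (τ x)).trans (congrArg θ (hτ x))

end RealLift

section Chords

variable {X : Type*} [TopologicalSpace X]

theorem exists_continuousMap_exp_eq [SimplyConnectedSpace X] [LocallyPathConnectedSpace X]
    (f : C(X, ℂ)) (hf : ∀ x, f x ≠ 0) : ∃ l : C(X, ℂ), ∀ x, Complex.exp (l x) = f x := by
  obtain ⟨x₀⟩ : Nonempty X := inferInstance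
  obtain ⟨l, ⟨-, hl⟩, -⟩ := Complex.isCoveringMapOn_exp.existsUnique_continuousMap_lifts f
    (Complex.exp_log (hf x₀)) hf
  exact ⟨l, congrFun hl⟩

theorem eq_of_exp_eq_const [PreconnectedSpace X] {l : X → ℂ} (hl : Continuous l) {z : ℂ}
    (h : ∀ x, Complex.exp (l x) = z) (x y : X) : l x = l y :=
  Complex.isCoveringMap_exp.const_of_comp hl (fun x y => Subtype.ext ((h x).trans (h y).symm)) x y

-- The branch `z ↦ log (-I * z)` of the logarithm is continuous on the closed upper half-plane
-- minus the origin.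
theorem im_sub_im_of_exp_im_nonneg [PreconnectedSpace X] {l : X → ℂ} (hl : Continuous l)
    (him : ∀ x, 0 ≤ (Complex.exp (l x)).im) {x y : X} {a b : ℝ} (ha : 0 < a) (hb : 0 < b)
    (hx : Complex.exp (l x) = -a) (hy : Complex.exp (l y) = b) :
    (l x).im - (l y).im = Real.pi := by
  have hslit (x : X) : -Complex.I * Complex.exp (l x) ∈ Complex.slitPlane := by
    obtain h | h := (him x).lt_or_eq
    · exact Or.inl (by simpa using h)
    · refine Or.inr fun h' => Complex.exp_ne_zero (l x) (Complex.ext ?_ h.symm)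
      simpa using h'
  have hconst := eq_of_exp_eq_const (z := Complex.I)
    (l := fun x => l x - Complex.log (-Complex.I * Complex.exp (l x)))
    (hl.sub (Continuous.clog (by fun_prop) hslit)) (fun x => by
      rw [Complex.exp_sub, Complex.exp_log (Complex.slitPlane_ne_zero (hslit x)),
        div_mul_cancel_right₀ (Complex.exp_ne_zero _), inv_neg, Complex.inv_I, neg_neg]) x y
  have hargx : (-Complex.I * Complex.exp (l x)).arg = Real.pi / 2 := by
    rw [hx, neg_mul_neg, mul_comm, Complex.arg_real_mul _ ha, Complex.arg_I]
  have hargy : (-Complex.I * Complex.exp (l y)).arg = -(Real.pi / 2) := by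
    rw [hy, mul_comm, Complex.arg_real_mul _ hb, Complex.arg_neg_I]
  have := congrArg Complex.im hconst
  simp only [Complex.sub_im, Complex.log_im, hargx, hargy] at this
  linarith

-- Hopf's argument: otherwise `c s - c u - a` has a continuous logarithm on the whole plane. It is
-- constant on the diagonal, but between two diagonal points at maximal height, one period apart,
-- its imaginary part grows by `π` along each of the two sides of a right triangle.
theorem exists_eq_add_of_add_period {c : ℝ → ℂ} (hc : Continuous c) {T a b : ℝ} (ha : 0 < a)
    (hab : a ≤ b) (hper : ∀ s, c (s + T) = c s + b) : ∃ s u, c s = c u + a := by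
  obtain rfl | hab := hab.eq_or_lt
  · exact ⟨0 + T, 0, hper 0⟩
  by_contra! hne
  have hT : T ≠ 0 := by
    rintro rfl
    have : b = 0 := by simpa using hper 0
    linarith
  obtain ⟨s₁, hs₁⟩ : ∃ s₁, ∀ s, (c s).im ≤ (c s₁).im := by
    have hp : Function.Periodic (fun s => (c s).im) T := fun s => by simp [hper]
    obtain ⟨_, ⟨s₁, rfl⟩, h⟩ :=
      (hp.compact_of_continuous hT (by fun_prop)).exists_isGreatest (range_nonempty _)
    exact ⟨s₁, fun s => h ⟨s, rfl⟩⟩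
  obtain ⟨l, hl⟩ := exists_continuousMap_exp_eq
    (⟨fun p => c p.1 - c p.2 - a, by fun_prop⟩ : C(ℝ × ℝ, ℂ)) fun p hp =>
      hne p.1 p.2 (sub_eq_iff_eq_add'.1 (sub_eq_zero.1 hp))
  replace hl (s u : ℝ) : Complex.exp (l (s, u)) = c s - c u - a := hl (s, u)
  have hdiag : l (s₁ + T, s₁ + T) = l (s₁, s₁) :=
    eq_of_exp_eq_const (l := fun s => l (s, s)) (z := -a) (by fun_prop)
      (fun s => by rw [hl, sub_self, zero_sub]) _ _
  have hvert : (l (s₁ + T, s₁ + T)).im - (l (s₁ + T, s₁)).im = Real.pi :=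
    im_sub_im_of_exp_im_nonneg (l := fun u => l (s₁ + T, u)) (by fun_prop)
      (fun u => by simpa [hl, hper] using hs₁ u) ha (sub_pos.2 hab)
      (by rw [hl]; ring) (by rw [hl, hper]; push_cast; ring)
  have hhor : (l (s₁ + T, s₁)).im - (l (s₁, s₁)).im = Real.pi := by
    have hexp (s : ℝ) : Complex.exp (l (s, s₁) + Real.pi * Complex.I) = c s₁ - c s + a := by
      rw [Complex.exp_add, hl, Complex.exp_pi_mul_I]; ring
    simpa using im_sub_im_of_exp_im_nonneg (l := fun s => l (s, s₁) + Real.pi * Complex.I)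
      (x := s₁ + T) (y := s₁) (by fun_prop) (fun s => by simpa [hexp] using hs₁ s)
      (sub_pos.2 hab) ha (by rw [hexp, hper]; push_cast; ring) (by rw [hexp]; ring)
  rw [hdiag] at hvert
  linarith [Real.pi_pos]

end Chords

section SimpleClosedCurves

variable {X : Type*} [TopologicalSpace X]

/-- The closed curve traversing one period of a periodic curve `δ`. -/
def periodLoop {δ : ℝ → X} (hδ : Continuous δ) {T : ℝ} (hT : Function.Periodic δ T) :
    Path (δ 0) (δ 0) where
  toFun s := δ (s * T)
  continuous_toFun := by fun_prop
  source' := by simp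
  target' := by simpa using hT 0

theorem range_periodLoop {δ : ℝ → X} (hδ : Continuous δ) {T : ℝ} (hT : Function.Periodic δ T)
    (hpos : 0 < T) : range (periodLoop hδ hT) = range δ := by
  refine Subset.antisymm (range_subset_iff.2 fun s => mem_range_self _) ?_
  rintro _ ⟨s, rfl⟩
  obtain ⟨u, hu, hsu⟩ := hT.exists_mem_Ico₀ hpos s
  refine ⟨⟨u / T, div_nonneg hu.1 hpos.le, (div_le_one hpos).2 hu.2.le⟩, hsu ▸ ?_⟩
  exact congrArg δ (div_mul_cancel₀ u hpos.ne')

theorem periodLoop_eq_imp {δ : ℝ → X} (hδ : Continuous δ) {T : ℝ} (hT : Function.Periodic δ T)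
    (h0 : T ≠ 0) (hinj : ∀ s u, δ s = δ u → s - u ∈ AddSubgroup.zmultiples T)
    (s u : unitInterval) (hsu : periodLoop hδ hT s = periodLoop hδ hT u) :
    s = u ∨ (s = 0 ∧ u = 1) ∨ (s = 1 ∧ u = 0) := by
  obtain ⟨n, hn⟩ := AddSubgroup.mem_zmultiples_iff.1 (hinj _ _ hsu)
  rw [zsmul_eq_mul, ← sub_mul] at hn
  replace hn : (n : ℝ) = s - u := mul_right_cancel₀ h0 hn
  have hlo : -1 ≤ n := by exact_mod_cast (by linarith [s.2.1, u.2.2] : (-1 : ℝ) ≤ n)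
  have hhi : n ≤ 1 := by exact_mod_cast (by linarith [s.2.2, u.2.1] : (n : ℝ) ≤ 1)
  have hs := s.2
  have hu := u.2
  simp only [mem_Icc] at hs hu
  simp only [Subtype.ext_iff, Icc.coe_zero, Icc.coe_one]
  obtain rfl | rfl | rfl : n = 0 ∨ n = -1 ∨ n = 1 := by lia
  all_goals push_cast at hn
  · exact .inl (by linarith)
  · exact .inr (.inl ⟨by linarith, by linarith⟩)
  · exact .inr (.inr ⟨by linarith, by linarith⟩)

theorem exists_add_period_eq {l : ℝ → ℝ} (hl : Continuous l) {T : ℝ}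
    (hT : Function.Periodic (fun s => Circle.exp (l s)) T) :
    ∃ n : ℤ, ∀ s, l (s + T) = l s + n * (2 * Real.pi) := by
  obtain ⟨n, hn⟩ := Circle.exp_eq_exp.1 (hT 0)
  refine ⟨n, fun s => ?_⟩
  linarith [sub_eq_sub_of_circleExp_eq (g₀ := fun s => l (s + T)) (by fun_prop) hl hT s 0]

theorem isUnit_winding {l h : ℝ → ℝ} (hl : Continuous l) (hh : Continuous h) {T : ℝ} {n : ℤ}
    (hlT : ∀ s, l (s + T) = l s + n * (2 * Real.pi)) (hhT : Function.Periodic h T)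
    (hinj : ∀ s u, Circle.exp (l s) = Circle.exp (l u) → h s = h u →
      s - u ∈ AddSubgroup.zmultiples T) (hn : n ≠ 0) : IsUnit n := by
  have hc : Continuous fun s => (l s + h s * Complex.I : ℂ) := by fun_prop
  have hpos (m : ℤ) (hm : 0 < m) : 2 * Real.pi ≤ m * (2 * Real.pi) :=
    le_mul_of_one_le_left Real.two_pi_pos.le (by exact_mod_cast hm)
  obtain ⟨s, u, hsu⟩ : ∃ s u,
      (l s + h s * Complex.I : ℂ) = l u + h u * Complex.I + (2 * Real.pi : ℝ) := by
    obtain hn | hn := hn.lt_or_gt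
    · refine exists_eq_add_of_add_period hc (T := -T) Real.two_pi_pos (hpos (-n) (by lia))
        fun s => ?_
      have h1 := hlT (s + -T)
      have h2 := hhT (s + -T)
      rw [neg_add_cancel_right] at h1 h2
      rw [h1, h2]; push_cast; ring
    · refine exists_eq_add_of_add_period hc (T := T) Real.two_pi_pos (hpos n hn) fun s => ?_
      rw [hlT, hhT]; push_cast; ring
  have hls : l s = l u + 2 * Real.pi := by simpa using congrArg Complex.re hsu
  have hhs : h s = h u := by simpa using congrArg Complex.im hsu
  obtain ⟨k, hk⟩ :=
    AddSubgroup.mem_zmultiples_iff.1 (hinj s u (by simp [hls, Circle.exp_add]) hhs)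
  have hlk : l (u + k • T) = l u + k • (n * (2 * Real.pi)) :=
    AddConstMapClass.map_add_zsmul (AddConstMap.mk l hlT) u k
  rw [hk, add_sub_cancel, hls, add_right_inj, zsmul_eq_mul, ← mul_assoc,
    right_eq_mul₀ Real.two_pi_pos.ne'] at hlk
  exact IsUnit.of_mul_eq_one_right k (by exact_mod_cast hlk)

end SimpleClosedCurves

section CoveringGenerator

variable {E X G : Type*} [TopologicalSpace E] [TopologicalSpace X] [Group G] [MulAction G E]

theorem zpowers_fromPath_eq_top_of_lift [SimplyConnectedSpace E] {p : E → X}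
    (hp : IsQuotientCoveringMap p G) {x : X} (γ : Path x x) {e : E} {g : G} (Γ : Path e (g • e))
    (hΓ : ∀ s, p (Γ s) = γ s) (hg : Subgroup.zpowers g = ⊤) :
    Subgroup.zpowers (FundamentalGroup.fromPath ⟦γ⟧) = ⊤ := by
  obtain rfl : p e = x := by simpa using hΓ 0
  have hend : hp.fundamentalGroupToMulOpposite ⟨e, rfl⟩ (.fromPath ⟦γ⟧) = .op g := by
    rw [hp.fundamentalGroupToMulOpposite_apply_eq_Iff]
    refine congrArg Subtype.val (hp.isCoveringMap.monodromy_eq_of_map_eq (γ := ⟦γ⟧)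
      (ey := ⟨g • e, hp.map_smul g⟩) ⟦Γ⟧ ?_).symm
    exact congrArg (Quotient.mk _) (Path.ext (funext hΓ))
  refine (Subgroup.eq_top_iff' _).2 fun δ => ?_
  obtain ⟨n, hn⟩ := Subgroup.mem_zpowers_iff.1
    (hg ▸ Subgroup.mem_top (hp.fundamentalGroupToMulOpposite ⟨e, rfl⟩ δ).unop)
  refine ⟨n, hp.fundamentalGroupToMulOpposite_injective ⟨e, rfl⟩ ?_⟩
  simp only [map_zpow, hend, ← MulOpposite.op_zpow, hn, MulOpposite.op_unop]

end CoveringGenerator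

section Cylinder

/-- The cylinder `x ^ 2 + y ^ 2 = 1` in `ℝ³`. -/
abbrev Cylinder := {p : ℝ × ℝ × ℝ // p.1 ^ 2 + p.2.1 ^ 2 = 1}

theorem mem_unitSphere_iff {z : ℂ} : z ∈ Submonoid.unitSphere ℂ ↔ z.re ^ 2 + z.im ^ 2 = 1 := by
  rw [← SetLike.mem_coe, Submonoid.coe_unitSphere, mem_sphere_zero_iff_norm,
    ← pow_eq_one_iff_of_nonneg (norm_nonneg z) two_ne_zero, Complex.sq_norm,
    Complex.normSq_apply, ← sq, ← sq]

/-- The cylinder as a product; the two coordinates are the angle and the height. -/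
def cylinderHomeomorph : Cylinder ≃ₜ Circle × ℝ where
  toFun p := (⟨⟨p.1.1, p.1.2.1⟩, mem_unitSphere_iff.2 p.2⟩, p.1.2.2)
  invFun q := ⟨((q.1 : ℂ).re, (q.1 : ℂ).im, q.2), mem_unitSphere_iff.1 q.1.2⟩
  continuous_toFun := by
    refine .prodMk (.subtype_mk ?_ _) (by fun_prop)
    exact Complex.equivRealProdCLM.symm.continuous.comp
      (f := fun p : Cylinder => (p.1.1, p.1.2.1)) (by fun_prop)
  continuous_invFun := by fun_prop

/-- The angular coordinate of a point of the cylinder. -/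
noncomputable def angle : C(Cylinder, Circle) :=
  ⟨fun p => (cylinderHomeomorph p).1, continuous_fst.comp cylinderHomeomorph.continuous⟩

/-- The coordinate along the axis of the cylinder. -/
def height : C(Cylinder, ℝ) := ⟨fun p => p.1.2.2, by fun_prop⟩

theorem not_hasRealLift_angle_levelSet {f : C(Cylinder, ℝ)} {t z₀ z₁ : ℝ}
    (h₀ : ∀ p, height p = z₀ → f p ≤ t) (h₁ : ∀ p, height p = z₁ → t ≤ f p) :
    ¬ HasRealLift (angle.restrict (f ⁻¹' {t})) := by
  intro h
  let i (z : ℝ) : C(Circle, Cylinder) :=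
    .comp cylinderHomeomorph.symm (.prodMk (.id Circle) (.const Circle z))
  have hi : (i z₀).Homotopic (i z₁) := by
    have hconst : (ContinuousMap.const Circle z₀).Homotopic (.const Circle z₁) :=
      ContinuousMap.homotopic_const_iff.2 (PathConnectedSpace.joined z₀ z₁)
    exact .comp (.refl _) (.prodMk (.refl _) hconst)
  have hheight (z : ℝ) (w : Circle) : height (i z w) = z :=
    congrArg Prod.snd (cylinderHomeomorph.apply_symm_apply (w, z))
  have hangle : angle.comp (i z₁) = .id Circle := ContinuousMap.ext fun w =>
    congrArg Prod.fst (cylinderHomeomorph.apply_symm_apply (w, z₁))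
  exact not_hasRealLift_id (hangle ▸ h.comp_of_homotopic_across_levelSet hi
    (fun w => h₀ _ (hheight z₀ w)) (fun w => h₁ _ (hheight z₁ w)))

/-- The universal covering `(θ, z) ↦ (cos θ, sin θ, z)` of the cylinder. -/
noncomputable def unroll : ℝ × ℝ → Cylinder := cylinderHomeomorph.symm ∘ Prod.map Circle.exp id

theorem isAddQuotientCoveringMap_unroll :
    IsAddQuotientCoveringMap unroll (AddSubgroup.zmultiples ((2 * Real.pi, 0) : ℝ × ℝ)) := by
  have hquot : IsQuotientMap (Prod.map Circle.exp id : ℝ × ℝ → Circle × ℝ) :=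
    (isLocalHomeomorph_circleExp.isOpenMap.prodMap IsOpenMap.id).isQuotientMap (by fun_prop)
      (Circle.exp_surjective.prodMap Function.surjective_id)
  refine (hquot.isAddQuotientCoveringMap_of_addSubgroup _
    ⟨NormedSpace.discreteTopology_zmultiples _⟩ ?_).homeomorph_comp cylinderHomeomorph.symm
  rintro ⟨x, z⟩ ⟨x', z'⟩
  simp only [Prod.map_apply, id_eq, Prod.mk.injEq, eq_comm (a := Circle.exp x), eq_comm (a := z),
    Circle.exp_eq_exp, AddSubgroup.mem_zmultiples_iff, Prod.smul_mk, zsmul_eq_mul, mul_zero,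
    Prod.mk_add_mk, Prod.neg_mk, eq_add_neg_iff_add_eq, zero_add, exists_and_right]
  simp only [add_comm, eq_comm]

theorem unroll_eq {θ : ℝ} {p : Cylinder} (h : Circle.exp θ = angle p) :
    unroll (θ, height p) = p :=
  cylinderHomeomorph.symm_apply_eq.2 (Prod.ext h rfl)

theorem zpowers_periodLoop_eq_top {δ : ℝ → Cylinder} (hδ : Continuous δ) {T : ℝ}
    (hT : Function.Periodic δ T) {l : ℝ → ℝ} (hl : Continuous l)
    (hlδ : ∀ s, Circle.exp (l s) = angle (δ s)) {n : ℤ} (hn : l T = l 0 + n * (2 * Real.pi))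
    (hunit : IsUnit n) :
    Subgroup.zpowers (FundamentalGroup.fromPath ⟦periodLoop hδ hT⟧) = ⊤ := by
  let g : AddSubgroup.zmultiples ((2 * Real.pi, 0) : ℝ × ℝ) :=
    ⟨n • (2 * Real.pi, 0), AddSubgroup.zsmul_mem_zmultiples _ n⟩
  let Γ : Path (l 0, height (δ 0)) (Multiplicative.ofAdd g • (l 0, height (δ 0))) :=
    { toFun s := (l (s * T), height (δ (s * T)))
      continuous_toFun := by fun_prop
      source' := by simp
      target' := by
        have h0 : δ T = δ 0 := by simpa using hT 0
        change _ = (n • (2 * Real.pi, 0) : ℝ × ℝ) + (l 0, height (δ 0))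
        simp [h0, hn, add_comm] }
  refine zpowers_fromPath_eq_top_of_lift isAddQuotientCoveringMap_unroll.toMultiplicative
    (periodLoop hδ hT) Γ (fun s => unroll_eq (hlδ _)) ?_
  refine (Subgroup.eq_top_iff' _).2 fun ⟨_, k, hk⟩ => ⟨k * n, ?_⟩
  refine Multiplicative.toAdd.injective (Subtype.ext ?_)
  calc (k * n) • n • ((2 * Real.pi, 0) : ℝ × ℝ)
    _ = k • (2 * Real.pi, 0) := by
      rw [mul_smul, ← mul_smul n, Int.isUnit_mul_self hunit, one_smul]
    _ = _ := hk

theorem exists_generating_component {X : Type*} [TopologicalSpace X] [CompactSpace X]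
    {ι : C(X, Cylinder)} (hι : Function.Injective ι) {ψ : Flow ℝ X}
    (hopen : ∀ x, IsOpenMap (ψ · x)) (hmove : ∀ x, ∃ s, ψ s x ≠ x)
    (hlift : ¬ HasRealLift (angle.comp ι)) :
    ∃ (x : X) (γ : Path (ι x) (ι x)),
      (∀ s u, γ s = γ u → s = u ∨ (s = 0 ∧ u = 1) ∨ (s = 1 ∧ u = 0)) ∧
      range γ = ι '' connectedComponent x ∧
      Subgroup.zpowers (FundamentalGroup.fromPath ⟦γ⟧) = ⊤ := by
  have : T2Space X := .of_injective_continuous hι ι.continuous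
  obtain ⟨x, hx⟩ : ∃ x, ∀ l : ℝ → ℝ, Continuous l →
      (∀ s, Circle.exp (l s) = angle (ι (ψ s x))) → ∃ s u, ψ s x = ψ u x ∧ l s ≠ l u := by
    contrapose! hlift
    exact .of_forall_orbit hopen hlift
  obtain ⟨T, hT, hψ⟩ := exists_period hopen (hmove x)
  have hcont : Continuous fun s => ι (ψ s x) := by
    have := ψ.continuous continuous_id (continuous_const (y := x))
    fun_prop
  have hper : Function.Periodic (fun s => ι (ψ s x)) T := fun s =>
    congrArg ι ((hψ _ _).2 (by simp))
  have hinj (s u : ℝ) (h : ι (ψ s x) = ι (ψ u x)) : s - u ∈ AddSubgroup.zmultiples T :=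
    (hψ s u).1 (hι h)
  obtain ⟨l, hl⟩ : HasRealLift (angle.comp ⟨_, hcont⟩) := .of_simplyConnectedSpace _
  obtain ⟨n, hn⟩ := exists_add_period_eq (l := l) (by fun_prop) (T := T) fun s =>
    (hl _).trans ((congrArg angle (hper s)).trans (hl s).symm)
  have hn0 : n ≠ 0 := by
    rintro rfl
    obtain ⟨s, u, hsu, hne⟩ := hx l (by fun_prop) hl
    obtain ⟨k, hk⟩ := AddSubgroup.mem_zmultiples_iff.1 ((hψ s u).1 hsu)
    have hlper : Function.Periodic l T := by simpa using hn
    exact hne (by simpa [hk] using hlper.zsmul k u)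
  have hunit : IsUnit n := isUnit_winding (l := l) (h := fun s => height (ι (ψ s x))) (by fun_prop)
    (by fun_prop) hn (fun s => congrArg height (hper s)) (fun s u hsu hh => hinj s u
      (cylinderHomeomorph.injective (Prod.ext ((hl s).symm.trans (hsu.trans (hl u))) hh))) hn0
  refine ⟨ψ 0 x, periodLoop hcont hper, periodLoop_eq_imp hcont hper hT.ne' hinj, ?_,
    zpowers_periodLoop_eq_top hcont hper (by fun_prop) hl (by simpa using hn 0) hunit⟩
  rw [range_periodLoop hcont hper hT, ψ.map_zero_apply, ← orbit_eq_connectedComponent hopen]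
  exact range_comp ι (ψ · x)

end Cylinder

section TangentField

/-- The map `(x ^ 2 + y ^ 2, F)`, whose fibre over `(1, t)` is the level set `F = t` on the
cylinder. -/
def cylinderMap (F : ℝ × ℝ × ℝ → ℝ) (p : ℝ × ℝ × ℝ) : ℝ × ℝ := (p.1 ^ 2 + p.2.1 ^ 2, F p)

/-- Half the cross product of the gradients of `x ^ 2 + y ^ 2` and of `F`; it is tangent to the
fibres of `cylinderMap F`. -/
noncomputable def tangentField (F : ℝ × ℝ × ℝ → ℝ) (p : ℝ × ℝ × ℝ) : ℝ × ℝ × ℝ :=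
  (p.2.1 * fderiv ℝ F p (0, 0, 1), -p.1 * fderiv ℝ F p (0, 0, 1),
    p.1 * fderiv ℝ F p (0, 1, 0) - p.2.1 * fderiv ℝ F p (1, 0, 0))

variable {F : ℝ × ℝ × ℝ → ℝ} {p : ℝ × ℝ × ℝ}

theorem clm_apply_eq_coordinates (L : ℝ × ℝ × ℝ →L[ℝ] ℝ) (v : ℝ × ℝ × ℝ) :
    L v = v.1 * L (1, 0, 0) + v.2.1 * L (0, 1, 0) + v.2.2 * L (0, 0, 1) := by
  have hv : v = v.1 • (1, 0, 0) + v.2.1 • (0, 1, 0) + v.2.2 • (0, 0, 1) := by simp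
  conv_lhs => rw [hv]
  simp only [map_add, map_smul, smul_eq_mul]

theorem fderiv_sq_add_sq (v : ℝ × ℝ × ℝ) :
    fderiv ℝ (fun q : ℝ × ℝ × ℝ => q.1 ^ 2 + q.2.1 ^ 2) p v =
      2 * (p.1 * v.1 + p.2.1 * v.2.1) := by
  have h₁ : HasFDerivAt (fun q : ℝ × ℝ × ℝ => q.1) (.fst ℝ ℝ (ℝ × ℝ)) p := hasFDerivAt_fst
  have h₂ : HasFDerivAt (fun q : ℝ × ℝ × ℝ => q.2.1)
      ((ContinuousLinearMap.fst ℝ ℝ ℝ).comp (.snd ℝ ℝ (ℝ × ℝ))) p :=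
    hasFDerivAt_fst.comp p hasFDerivAt_snd
  refine (DFunLike.congr_fun ((h₁.pow 2).add (h₂.pow 2)).fderiv v).trans ?_
  simp [mul_add, mul_assoc]

theorem fderiv_cylinderMap (hF : DifferentiableAt ℝ F p) (v : ℝ × ℝ × ℝ) :
    fderiv ℝ (cylinderMap F) p v = (2 * (p.1 * v.1 + p.2.1 * v.2.1), fderiv ℝ F p v) := by
  have h : DifferentiableAt ℝ (fun q : ℝ × ℝ × ℝ => q.1 ^ 2 + q.2.1 ^ 2) p := by fun_prop
  rw [← fderiv_sq_add_sq]
  exact DFunLike.congr_fun (h.hasFDerivAt.prodMk hF.hasFDerivAt).fderiv v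

theorem contDiff_cylinderMap {n : WithTop ℕ∞} (hF : ContDiff ℝ n F) :
    ContDiff ℝ n (cylinderMap F) := by
  unfold cylinderMap
  fun_prop

theorem contDiff_tangentField {n : WithTop ℕ∞} (hF : ContDiff ℝ (n + 1) F) :
    ContDiff ℝ n (tangentField F) := by
  have (v : ℝ × ℝ × ℝ) : ContDiff ℝ n fun p => fderiv ℝ F p v :=
    (hF.fderiv_right le_rfl).clm_apply contDiff_const
  unfold tangentField
  fun_prop

theorem fderiv_cylinderMap_tangentField (hF : DifferentiableAt ℝ F p) :
    fderiv ℝ (cylinderMap F) p (tangentField F p) = 0 := by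
  rw [fderiv_cylinderMap hF, clm_apply_eq_coordinates]
  refine Prod.ext ?_ ?_ <;> simp only [tangentField, Prod.fst_zero, Prod.snd_zero] <;> ring

theorem fderiv_eq_of_tangent_cylinder (hp : p.1 ^ 2 + p.2.1 ^ 2 = 1) {v : ℝ × ℝ × ℝ}
    (hv : p.1 * v.1 + p.2.1 * v.2.1 = 0) :
    fderiv ℝ F p v = v.2.2 * fderiv ℝ F p (0, 0, 1) -
      (p.2.1 * v.1 - p.1 * v.2.1) * (tangentField F p).2.2 := by
  rw [clm_apply_eq_coordinates]
  simp only [tangentField]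
  linear_combination
    -(v.1 * fderiv ℝ F p (1, 0, 0) + v.2.1 * fderiv ℝ F p (0, 1, 0)) * hp +
      (p.1 * fderiv ℝ F p (1, 0, 0) + p.2.1 * fderiv ℝ F p (0, 1, 0)) * hv

theorem tangentField_ne_zero (hp : p.1 ^ 2 + p.2.1 ^ 2 = 1) {v : ℝ × ℝ × ℝ}
    (hv : p.1 * v.1 + p.2.1 * v.2.1 = 0) (hFv : fderiv ℝ F p v ≠ 0) : tangentField F p ≠ 0 := by
  contrapose! hFv
  obtain ⟨h₁, h₂, h₃⟩ : p.2.1 * fderiv ℝ F p (0, 0, 1) = 0 ∧ -p.1 * fderiv ℝ F p (0, 0, 1) = 0 ∧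
      (tangentField F p).2.2 = 0 := by
    simpa only [tangentField, Prod.mk_eq_zero] using hFv
  have hz : fderiv ℝ F p (0, 0, 1) = 0 := by
    linear_combination p.2.1 * h₁ - p.1 * h₂ - fderiv ℝ F p (0, 0, 1) * hp
  rw [fderiv_eq_of_tangent_cylinder hp hv, hz, h₃, mul_zero, mul_zero, sub_zero]

theorem ker_fderiv_cylinderMap_le_span (hF : DifferentiableAt ℝ F p)
    (hp : p.1 ^ 2 + p.2.1 ^ 2 = 1) (hW : tangentField F p ≠ 0) :
    (fderiv ℝ (cylinderMap F) p).ker ≤ Submodule.span ℝ {tangentField F p} := by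
  intro v hv
  obtain ⟨hv, hFv⟩ : 2 * (p.1 * v.1 + p.2.1 * v.2.1) = 0 ∧ fderiv ℝ F p v = 0 := by
    rwa [LinearMap.mem_ker, ContinuousLinearMap.coe_coe, fderiv_cylinderMap hF,
      Prod.mk_eq_zero] at hv
  replace hv : p.1 * v.1 + p.2.1 * v.2.1 = 0 := by linarith
  rw [fderiv_eq_of_tangent_cylinder hp hv] at hFv
  set C := fderiv ℝ F p (0, 0, 1)
  set A := (tangentField F p).2.2
  have hWeq : tangentField F p = (p.2.1 * C, -p.1 * C, A) := rfl
  have hN : C ^ 2 + A ^ 2 ≠ 0 := by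
    contrapose! hW
    obtain ⟨hC0, hA0⟩ : C = 0 ∧ A = 0 := by constructor <;> nlinarith
    simp [hWeq, hC0, hA0]
  refine Submodule.mem_span_singleton.2
    ⟨((p.2.1 * v.1 - p.1 * v.2.1) * C + v.2.2 * A) / (C ^ 2 + A ^ 2), ?_⟩
  rw [hWeq]
  ext <;> simp only [Prod.smul_mk, smul_eq_mul] <;> rw [div_mul_eq_mul_div, div_eq_iff hN]
  · linear_combination p.2.1 * A * hFv + (C ^ 2 + A ^ 2) * (v.1 * hp - p.1 * hv)
  · linear_combination -p.1 * A * hFv + (C ^ 2 + A ^ 2) * (v.2.1 * hp - p.2.1 * hv)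
  · linear_combination -C * hFv

end TangentField

section LevelSet

variable {F : ℝ × ℝ × ℝ → ℝ} {t : ℝ}

theorem isCompact_preimage_cylinderMap (hF : Continuous F) {a b : ℝ}
    (hlow : ∀ p : Cylinder, p.1.2.2 ≤ a → F p < t) (hhigh : ∀ p : Cylinder, b ≤ p.1.2.2 → t < F p) :
    IsCompact (cylinderMap F ⁻¹' {(1, t)}) := by
  have hcont : Continuous (cylinderMap F) := by unfold cylinderMap; fun_prop
  refine (isCompact_Icc.prod (isCompact_Icc.prod isCompact_Icc)).of_isClosed_subset
    (isClosed_singleton.preimage hcont) (s := Icc (-1) 1 ×ˢ Icc (-1) 1 ×ˢ Icc a b) ?_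
  rintro ⟨x, y, z⟩ hp
  obtain ⟨hxy, hz⟩ := Prod.mk.inj hp
  refine ⟨abs_le.1 ?_, abs_le.1 ?_, ?_, ?_⟩
  · exact abs_le_one_iff_mul_self_le_one.2 (by nlinarith)
  · exact abs_le_one_iff_mul_self_le_one.2 (by nlinarith)
  · exact not_lt.1 fun h => (hlow ⟨_, hxy⟩ h.le).ne hz
  · exact not_lt.1 fun h => (hhigh ⟨_, hxy⟩ h.le).ne' hz

theorem exists_flow_cylinderMap_isOpenMap (hF : ContDiff ℝ 2 F)
    (hcpt : IsCompact (cylinderMap F ⁻¹' {(1, t)}))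
    (hreg : ∀ p : Cylinder, F p = t → ∃ v : ℝ × ℝ × ℝ,
      fderiv ℝ (fun q : ℝ × ℝ × ℝ => q.1 ^ 2 + q.2.1 ^ 2) p v = 0 ∧ fderiv ℝ F p v ≠ 0) :
    ∃ ψ : Flow ℝ (cylinderMap F ⁻¹' {(1, t)}), ∀ x, IsOpenMap (ψ · x) ∧ ∃ s, ψ s x ≠ x := by
  have hdiff : Differentiable ℝ F := hF.differentiable two_ne_zero
  have hne (p) (hp : p ∈ cylinderMap F ⁻¹' {(1, t)}) : tangentField F p ≠ 0 := by
    obtain ⟨v, hv, hFv⟩ := hreg ⟨p, congrArg Prod.fst hp⟩ (congrArg Prod.snd hp)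
    rw [fderiv_sq_add_sq] at hv
    exact tangentField_ne_zero (congrArg Prod.fst hp) (by linarith) hFv
  exact exists_flow_levelSet_isOpenMap
    (contDiff_cylinderMap (hF.of_le one_le_two)) (contDiff_tangentField hF)
    (fun p => fderiv_cylinderMap_tangentField (hdiff p)) hcpt hne
    (fun p hp => ker_fderiv_cylinderMap_le_span (hdiff p) (congrArg Prod.fst hp) (hne p hp))

/-- The inclusion into the cylinder of the level set `F = t`, seen as a fibre of `cylinderMap F`. -/
def levelSetInclusion (F : ℝ × ℝ × ℝ → ℝ) (t : ℝ) : C(cylinderMap F ⁻¹' {(1, t)}, Cylinder) :=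
  ⟨fun x => ⟨x, congrArg Prod.fst x.2⟩, by fun_prop⟩

theorem isEmbedding_levelSetInclusion : IsEmbedding (levelSetInclusion F t) :=
  .of_comp (levelSetInclusion F t).continuous continuous_subtype_val .subtypeVal

theorem range_levelSetInclusion : range (levelSetInclusion F t) = {z : Cylinder | F z = t} := by
  ext z
  exact ⟨fun ⟨x, hx⟩ => hx ▸ congrArg Prod.snd x.2, fun hz => ⟨⟨z, Prod.ext z.2 hz⟩, rfl⟩⟩

theorem not_hasRealLift_angle_levelSetInclusion (hF : Continuous F) {a b : ℝ}
    (hlow : ∀ p : Cylinder, p.1.2.2 ≤ a → F p < t) (hhigh : ∀ p : Cylinder, b ≤ p.1.2.2 → t < F p) :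
    ¬ HasRealLift (angle.comp (levelSetInclusion F t)) := by
  rintro ⟨g, hg⟩
  let f : C(Cylinder, ℝ) := ⟨fun p => F p, by fun_prop⟩
  let κ : C(f ⁻¹' {t}, cylinderMap F ⁻¹' {(1, t)}) :=
    ⟨fun z => ⟨z.1, Prod.ext z.1.2 z.2⟩, by fun_prop⟩
  exact not_hasRealLift_angle_levelSet (f := f) (fun p hp => (hlow p hp.le).le)
    (fun p hp => (hhigh p hp.ge).le) ⟨g.comp κ, fun z => hg (κ z)⟩

end LevelSet

end CylinderLevelSet

open CylinderLevelSet in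
theorem level_set_component_generates_cylinder_pi1_general
    (F : ℝ × ℝ × ℝ → ℝ) (hF : ContDiff ℝ 2 F) (t : ℝ)
    (htop : ∀ᶠ p : Cylinder in comap (fun p => p.1.2.2) atTop, t < F p)
    (hbot : ∀ᶠ p : Cylinder in comap (fun p => p.1.2.2) atBot, F p < t)
    (hreg : ∀ p : Cylinder, F p = t → ∃ v : ℝ × ℝ × ℝ,
      fderiv ℝ (fun q : ℝ × ℝ × ℝ => q.1 ^ 2 + q.2.1 ^ 2) p v = 0 ∧ fderiv ℝ F p v ≠ 0) :
    ∃ (p : Cylinder) (γ : Path p p),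
      F p = t ∧
      (∀ s, F (γ s) = t) ∧
      (∀ s u, γ s = γ u → s = u ∨ (s = 0 ∧ u = 1) ∨ (s = 1 ∧ u = 0)) ∧
      range γ = connectedComponentIn {z : Cylinder | F z = t} p ∧
      Subgroup.zpowers (FundamentalGroup.fromPath ⟦γ⟧) = ⊤ := by
  obtain ⟨b, hhigh⟩ := eventually_atTop.1 (eventually_comap.1 htop)
  obtain ⟨a, hlow⟩ := eventually_atBot.1 (eventually_comap.1 hbot)
  replace hhigh (p : Cylinder) (hp : b ≤ p.1.2.2) := hhigh _ hp p rfl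
  replace hlow (p : Cylinder) (hp : p.1.2.2 ≤ a) := hlow _ hp p rfl
  have hcpt := isCompact_preimage_cylinderMap hF.continuous hlow hhigh
  obtain ⟨ψ, hψ⟩ := exists_flow_cylinderMap_isOpenMap hF hcpt hreg
  have : CompactSpace (cylinderMap F ⁻¹' {(1, t)}) := isCompact_iff_compactSpace.1 hcpt
  have hemb := isEmbedding_levelSetInclusion (F := F) (t := t)
  obtain ⟨x, γ, hsimple, hrange, hgen⟩ := exists_generating_component hemb.injective
    (fun x => (hψ x).1) (fun x => (hψ x).2)
    (not_hasRealLift_angle_levelSetInclusion hF.continuous hlow hhigh)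
  rw [← connectedComponentIn_range hemb.isInducing, range_levelSetInclusion] at hrange
  have hmem (s) : γ s ∈ {z : Cylinder | F z = t} :=
    connectedComponentIn_subset _ _ (hrange ▸ mem_range_self s)
  exact ⟨levelSetInclusion F t x, γ, γ.source ▸ hmem 0, hmem, hsimple, hrange, hgen⟩

/-- Let `Z = {(x,y,z) ∈ ℝ³ : x² + y² = 1}` be the cylinder and `F` a smooth
function on `ℝ³` whose restriction `f` to `Z` is proper (tending to `±∞` as
`z → ±∞` uniformly).  For any regular value `t` of `f`, the level set `f⁻¹(t)`
has a connected component which is a simple closed curve generating `π₁(Z)`. -/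
theorem level_set_component_generates_cylinder_pi1
    (F : ℝ × ℝ × ℝ → ℝ) (hF : ContDiff ℝ (⊤ : ℕ∞) F)
    (htop : Filter.Tendsto (fun p : {p : ℝ × ℝ × ℝ // p.1 ^ 2 + p.2.1 ^ 2 = 1} => F ↑p)
      (Filter.comap (fun p : {p : ℝ × ℝ × ℝ // p.1 ^ 2 + p.2.1 ^ 2 = 1} => (↑p : ℝ × ℝ × ℝ).2.2)
        Filter.atTop) Filter.atTop)
    (hbot : Filter.Tendsto (fun p : {p : ℝ × ℝ × ℝ // p.1 ^ 2 + p.2.1 ^ 2 = 1} => F ↑p)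
      (Filter.comap (fun p : {p : ℝ × ℝ × ℝ // p.1 ^ 2 + p.2.1 ^ 2 = 1} => (↑p : ℝ × ℝ × ℝ).2.2)
        Filter.atBot) Filter.atBot)
    (t : ℝ)
    (hreg : ∀ p : {p : ℝ × ℝ × ℝ // p.1 ^ 2 + p.2.1 ^ 2 = 1}, F ↑p = t →
      ∃ v : ℝ × ℝ × ℝ,
        fderiv ℝ (fun q : ℝ × ℝ × ℝ => q.1 ^ 2 + q.2.1 ^ 2) ↑p v = 0 ∧
        fderiv ℝ F ↑p v ≠ 0) :
    ∃ (p : {p : ℝ × ℝ × ℝ // p.1 ^ 2 + p.2.1 ^ 2 = 1}) (γ : Path p p),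
      F ↑p = t ∧
      (∀ s : unitInterval, F ↑(γ s) = t) ∧
      (∀ s u : unitInterval, γ s = γ u →
        s = u ∨ (s = 0 ∧ u = 1) ∨ (s = 1 ∧ u = 0)) ∧
      Set.range (fun s : unitInterval => γ s)
        = connectedComponentIn {z : {p : ℝ × ℝ × ℝ // p.1 ^ 2 + p.2.1 ^ 2 = 1} | F ↑z = t} p ∧
      Subgroup.zpowers
        (FundamentalGroup.fromPath
          (X := TopCat.of {p : ℝ × ℝ × ℝ // p.1 ^ 2 + p.2.1 ^ 2 = 1}) ⟦γ⟧) = ⊤ := by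
  exact level_set_component_generates_cylinder_pi1_general F
    (contDiff_infty.1 hF 2) t (htop.eventually_gt_atTop t) (hbot.eventually_lt_atBot t) hreg
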